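/- arXiv:0806.0855 — 7 statements merged into one kernel-verified Lean document; each statement's English description precedes it below -/
import Mathlib

section
/- In the witness iteration, every expectation value w_n = trace(R · B_n B_n†) is a real number, and the sequence (w_n) is monotonically decreasing: w_{n+1} ≤ w_n for all n ≥ 1, regardless of the starting operator B₁ and of the choice of unitaries. -/
open Matrix ComplexOrder

/-!
Write `w = trace (R * (B * Bᴴ))`. Replacing `B` by `C = B * U` with `U` unitary does not change
`B * Bᴴ`, hence not `w`. Put `t = trace (R * C)`; since `R` is Hermitian, `trace (R * Cᴴ)` is the
conjugate of `t`. Subtracting `t • 1` from `C` therefore contributes two cross terms `-|t|²` and a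
square `|t|² * trace R`, so `w` drops by `(2 - trace R) * |t|²`. When `trace R = 1` this is the
improvement `c = |t|²`.
-/

theorem mul_unitary_mul_star {M : Type*} [Monoid M] [StarMul M] (b : M) {u : M}
    (hu : u ∈ unitary M) : b * u * star (b * u) = b * star b := by
  rw [star_mul, mul_assoc, ← mul_assoc u, Unitary.mul_star_self_of_mem hu, one_mul]

section HermitianTrace

variable {ι α : Type*} [Fintype ι] {R : Matrix ι ι α}

theorem trace_mul_conjTranspose_of_isHermitian [NonUnitalNonAssocCommSemiring α] [StarRing α]
    (hR : R.IsHermitian) (M : Matrix ι ι α) : (R * Mᴴ).trace = star (R * M).trace := by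
  rw [← trace_conjTranspose, conjTranspose_mul, hR.eq, trace_mul_comm]

theorem isSelfAdjoint_trace_mul_of_isHermitian [NonUnitalNonAssocCommSemiring α] [StarRing α]
    (hR : R.IsHermitian) {A : Matrix ι ι α} (hA : A.IsHermitian) :
    IsSelfAdjoint (R * A).trace := by
  rw [isSelfAdjoint_iff, ← trace_mul_conjTranspose_of_isHermitian hR, hA.eq]

theorem trace_mul_sub_smul_one_mul_conjTranspose [DecidableEq ι] [CommRing α] [StarRing α]
    (hR : R.IsHermitian) (C : Matrix ι ι α) (s : α) :
    (R * ((C - s • 1) * (C - s • 1)ᴴ)).trace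
      = (R * (C * Cᴴ)).trace - star s * (R * C).trace - s * star (R * C).trace
        + s * star s * R.trace := by
  simp only [conjTranspose_sub, conjTranspose_smul, conjTranspose_one, Matrix.sub_mul,
    Matrix.mul_sub, Matrix.smul_mul, Matrix.mul_smul, Matrix.one_mul, Matrix.mul_one, trace_sub,
    trace_smul, trace_mul_conjTranspose_of_isHermitian hR, smul_eq_mul]
  ring

theorem trace_mul_sub_trace_smul_one_mul_conjTranspose [DecidableEq ι] [CommRing α] [StarRing α]
    (hR : R.IsHermitian) (C : Matrix ι ι α) :
    (R * ((C - (R * C).trace • 1) * (C - (R * C).trace • 1)ᴴ)).trace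
      = (R * (C * Cᴴ)).trace - (R * C).trace * (2 - R.trace) * star (R * C).trace := by
  rw [trace_mul_sub_smul_one_mul_conjTranspose hR]
  ring

theorem trace_mul_sub_trace_smul_one_mul_conjTranspose_le [DecidableEq ι] [CommRing α]
    [PartialOrder α] [StarRing α] [StarOrderedRing α] (hR : R.IsHermitian) (htr : R.trace ≤ 2)
    (C : Matrix ι ι α) :
    (R * ((C - (R * C).trace • 1) * (C - (R * C).trace • 1)ᴴ)).trace ≤ (R * (C * Cᴴ)).trace := by
  rw [trace_mul_sub_trace_smul_one_mul_conjTranspose hR]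
  exact sub_le_self _ (star_right_conjugate_nonneg (sub_nonneg.mpr htr) _)

end HermitianTrace

theorem witness_iteration_expectation_real_and_decreasing_general
    {ι α : Type*} [Fintype ι] [DecidableEq ι]
    [CommRing α] [PartialOrder α] [StarRing α] [StarOrderedRing α]
    {R : Matrix ι ι α} (hR : R.IsHermitian) (htr : R.trace ≤ 2)
    {B U : ℕ → Matrix ι ι α}
    (hU : ∀ n, 1 ≤ n → U n ∈ Matrix.unitaryGroup ι α)
    (hB : ∀ n, 1 ≤ n → B (n + 1) = B n * U n - (R * (B n * U n)).trace • (1 : Matrix ι ι α)) :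
    ∀ n, 1 ≤ n →
      IsSelfAdjoint (R * (B n * (B n)ᴴ)).trace ∧
      (R * (B (n + 1) * (B (n + 1))ᴴ)).trace ≤ (R * (B n * (B n)ᴴ)).trace := by
  intro n hn
  have gram_eq : B n * U n * (B n * U n)ᴴ = B n * (B n)ᴴ := mul_unitary_mul_star (B n) (hU n hn)
  refine ⟨isSelfAdjoint_trace_mul_of_isHermitian hR (isHermitian_mul_conjTranspose_self (B n)), ?_⟩
  rw [hB n hn, ← gram_eq]
  exact trace_mul_sub_trace_smul_one_mul_conjTranspose_le hR htr (B n * U n)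

/-- **Monotonicity of the expectation values of the witness iteration.**
For a Hermitian `R` with `trace R = 1` and the iteration
`B (n+1) = B n * U n - trace(R * B n * U n) • 𝟙` (each `U n` unitary),
every expectation value `w n = trace(R * B n * B nᴴ)` is real and the sequence is
monotonically decreasing: `w (n+1) ≤ w n` for all `n ≥ 1`. -/
theorem witness_iteration_expectation_real_and_decreasing
    {d : ℕ} (hd : 1 ≤ d)
    (R : Matrix (Fin d) (Fin d) ℂ) (hR : R.IsHermitian) (htr : R.trace = 1)
    (B U : ℕ → Matrix (Fin d) (Fin d) ℂ)
    (hU : ∀ n, 1 ≤ n → U n ∈ Matrix.unitaryGroup (Fin d) ℂ)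
    (hB : ∀ n, 1 ≤ n →
      B (n + 1) = B n * U n
        - ((R * (B n * U n)).trace) • (1 : Matrix (Fin d) (Fin d) ℂ)) :
    ∀ n, 1 ≤ n →
      ((R * (B n * (B n)ᴴ)).trace).im = 0 ∧
      (R * (B (n + 1) * (B (n + 1))ᴴ)).trace ≤ (R * (B n * (B n)ᴴ)).trace := by
  intro n hn
  exact (witness_iteration_expectation_real_and_decreasing_general hR
    (htr.trans_le one_le_two) hU hB n hn).imp_left Complex.conj_eq_iff_im.mp
end

section
/- Detection for the example sequence: let R be Hermitian with trace(R) = 1 and not positive semidefinite, let B₁ be positive definite, and choose the unitaries U₁ = P₊ − P₋ and U_n = P₋ − P₊ for all n ≥ 2. Then the sequence of expectation values w_n = trace(R · B_n B_n†) diverges to −∞; in particular there exists N₀ ∈ ℕ such that w_n < 0 for all n ≥ N₀. -/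
open Matrix ComplexOrder Filter

/-!
Put `S = P₊ - P₋`, so that `R * S = |R|`, and follow `x n = trace (R * B n * S)`. Each step
makes `trace (R * B (n + 1))` vanish and lowers `w n` by `‖trace (R * B n * U n)‖ ^ 2`. For
`n ≥ 2`, where `U n = -S`, the decrement is `‖x n‖ ^ 2` and `x (n + 1) = trace |R| * x n`.
Since `R` has trace one and is not positive semidefinite, `trace |R| > 1`, so the decrements grow
geometrically once `x 2 ≠ 0`. The first step, with `U 1 = S`, ensures this:
`x 2 = trace (R * B 1) - trace |R| * trace (|R| * B 1) < 0`, because `R ≤ |R|` and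
`trace (|R| * B 1) > 0`.
-/

lemma tendsto_atBot_of_succ_eq_sub {f g : ℕ → ℝ} (hg : Tendsto g atTop atTop)
    (hg_nonneg : ∀ n, 0 ≤ g n) (hfg : ∀ n, f (n + 1) = f n - g n) : Tendsto f atTop atBot := by
  have hf : Antitone f := antitone_nat_of_succ_le fun n =>
    (hfg n).trans_le (sub_le_self _ (hg_nonneg n))
  have hbound (n : ℕ) : f (n + 1) ≤ f 0 + -g n := by
    rw [hfg, ← sub_eq_add_neg]
    exact sub_le_sub_right (hf n.zero_le) _
  exact (tendsto_add_atTop_iff_nat 1).mp <| tendsto_atBot_mono hbound <|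
    tendsto_atBot_add_const_left _ _ (tendsto_neg_atTop_atBot.comp hg)

lemma one_lt_norm_of_one_lt {𝕜 : Type*} [RCLike 𝕜] {z : 𝕜} (hz : 1 < z) : 1 < ‖z‖ := by
  have hnorm : (‖z‖ : 𝕜) = z := RCLike.norm_of_nonneg' (zero_le_one.trans hz.le)
  rw [← hnorm] at hz
  exact_mod_cast hz

section Positivity

open scoped MatrixOrder

variable {ι 𝕜 : Type*} [Fintype ι] [RCLike 𝕜] {A B R P : Matrix ι ι 𝕜}

lemma trace_le_trace (h : A ≤ B) : A.trace ≤ B.trace := by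
  simpa only [trace_sub, sub_nonneg] using h.trace_nonneg

lemma trace_lt_trace (h : A < B) : A.trace < B.trace := by
  refine (trace_le_trace h.le).lt_of_ne fun htr => h.ne' ?_
  rw [← sub_eq_zero, ← PosSemidef.trace_eq_zero_iff h.le, trace_sub, htr, sub_self]

lemma trace_mul_nonneg (hA : A.PosSemidef) (hB : B.PosSemidef) : 0 ≤ (A * B).trace := by
  classical
  obtain ⟨D, rfl⟩ := CStarAlgebra.nonneg_iff_eq_star_mul_self.mp hB.nonneg
  rw [star_eq_conjTranspose, ← Matrix.mul_assoc, trace_mul_comm, ← Matrix.mul_assoc]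
  exact (hA.mul_mul_conjTranspose_same D).trace_nonneg

lemma trace_mul_eq_zero_iff (hA : A.PosSemidef) (hB : B.PosSemidef) :
    (A * B).trace = 0 ↔ A * B = 0 := by
  classical
  obtain ⟨C, rfl⟩ := CStarAlgebra.nonneg_iff_eq_star_mul_self.mp hA.nonneg
  obtain ⟨D, rfl⟩ := CStarAlgebra.nonneg_iff_eq_star_mul_self.mp hB.nonneg
  -- The trace is the squared Frobenius norm of `C * Dᴴ`.
  have htrace : (Cᴴ * C * (Dᴴ * D)).trace = ((C * Dᴴ)ᴴ * (C * Dᴴ)).trace := by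
    rw [← Matrix.mul_assoc, trace_mul_comm, conjTranspose_mul, conjTranspose_conjTranspose]
    simp only [Matrix.mul_assoc]
  simp only [star_eq_conjTranspose]
  rw [htrace, trace_conjTranspose_mul_self_eq_zero_iff, conjTranspose_mul_self_mul_eq_zero,
    mul_conjTranspose_mul_self_eq_zero]

lemma trace_mul_le_trace_mul (hRA : R ≤ A) (hB : B.PosSemidef) :
    (R * B).trace ≤ (A * B).trace := by
  simpa only [sub_mul, trace_sub, sub_nonneg] using trace_mul_nonneg hRA hB

lemma trace_mul_lt_trace_mul_trace_mul (hRA : R ≤ A) (hA : A.PosSemidef) (hB : B.PosSemidef)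
    (hAB : A * B ≠ 0) (htrA : 1 < A.trace) : (R * B).trace < A.trace * (A * B).trace := by
  have hpos : 0 < (A * B).trace :=
    (trace_mul_nonneg hA hB).lt_of_ne' (mt (trace_mul_eq_zero_iff hA hB).mp hAB)
  exact (trace_mul_le_trace_mul hRA hB).trans_lt (lt_mul_of_one_lt_left hpos htrA)

variable [DecidableEq ι]

lemma isHermitian_of_mul_one_sub_of_mul (hpos : (R * (1 - P)).PosSemidef)
    (hneg : (-(R * P)).PosSemidef) : R.IsHermitian := by
  have hsplit : R = R * (1 - P) - -(R * P) := by noncomm_ring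
  rw [hsplit]
  exact hpos.isHermitian.sub hneg.isHermitian

lemma posSemidef_mul_one_sub_sub (hpos : (R * (1 - P)).PosSemidef)
    (hneg : (-(R * P)).PosSemidef) : (R * (1 - P - P)).PosSemidef := by
  rw [mul_sub, sub_eq_add_neg]
  exact hpos.add hneg

lemma le_mul_one_sub_sub (hneg : (-(R * P)).PosSemidef) : R ≤ R * (1 - P - P) := by
  have hdiff : R * (1 - P - P) - R = -(R * P) + -(R * P) := by noncomm_ring
  rw [le_iff, hdiff]
  exact hneg.add hneg

end Positivity

lemma one_sub_sub_mul_self_eq_one {A : Type*} [Ring A] {p : A} (hp : IsIdempotentElem p) :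
    (1 - p - p) * (1 - p - p) = 1 := by
  have hpp : p * p = p := hp
  simp only [mul_sub, sub_mul, mul_one, one_mul, hpp]
  abel

/-- The expectation value `w = trace(R B B†)`, as a real number. For Hermitian `R` the trace is
real, so that taking its real part loses nothing. -/
def expectationValue {ι 𝕜 : Type*} [Fintype ι] [RCLike 𝕜] (R B : Matrix ι ι 𝕜) : ℝ :=
  RCLike.re (R * (B * Bᴴ)).trace

section DetectorStep

variable {ι 𝕜 : Type*} [Fintype ι] [DecidableEq ι]

/-- One step `B ↦ B U - trace(R B U) 𝟙` of the iteration `B_{n+1} = B_n U_n - trace(R B_n U_n) 𝟙`,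
over an arbitrary coefficient ring. -/
def detectorStep [CommRing 𝕜] (R U B : Matrix ι ι 𝕜) : Matrix ι ι 𝕜 :=
  B * U - (R * (B * U)).trace • (1 : Matrix ι ι 𝕜)

section CommRing

variable [CommRing 𝕜] {R S U B : Matrix ι ι 𝕜}

lemma detectorStep_neg : detectorStep R (-U) B = -detectorStep R U B := by
  simp only [detectorStep, mul_neg, trace_neg, neg_smul]
  abel

lemma trace_mul_detectorStep (htr : R.trace = 1) : (R * detectorStep R U B).trace = 0 := by
  simp only [detectorStep, mul_sub, Matrix.mul_smul, mul_one, trace_sub, trace_smul, htr,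
    smul_eq_mul, sub_self]

lemma trace_mul_detectorStep_mul_of_mul_self_eq_one (hS : S * S = 1) :
    (R * (detectorStep R S B * S)).trace =
      (R * B).trace - (R * S).trace * (R * (B * S)).trace := by
  rw [detectorStep, sub_mul, Matrix.mul_assoc, hS, smul_mul, one_mul, mul_one, mul_sub, trace_sub,
    Matrix.mul_smul, trace_smul, smul_eq_mul, mul_comm (R * S).trace]

lemma trace_mul_detectorStep_mul_conjTranspose [StarRing 𝕜] (hR : R.IsHermitian)
    (htr : R.trace = 1) (hU : U * Uᴴ = 1) :
    (R * (detectorStep R U B * (detectorStep R U B)ᴴ)).trace =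
      (R * (B * Bᴴ)).trace - (R * (B * U)).trace * star (R * (B * U)).trace := by
  have hconj : (R * (B * U)ᴴ).trace = star (R * (B * U)).trace := by
    rw [← trace_conjTranspose, conjTranspose_mul R, hR.eq, trace_mul_comm]
  have hunitary : B * U * (B * U)ᴴ = B * Bᴴ := by
    rw [conjTranspose_mul, Matrix.mul_assoc, ← Matrix.mul_assoc U, hU, one_mul]
  simp only [detectorStep, conjTranspose_sub, conjTranspose_smul, conjTranspose_one, sub_mul,
    mul_sub, hunitary, Matrix.mul_smul, Matrix.smul_mul, mul_one, one_mul, trace_sub, trace_smul,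
    hconj, htr, smul_eq_mul]
  ring

end CommRing

variable [RCLike 𝕜] {R S U B : Matrix ι ι 𝕜}

lemma expectationValue_detectorStep (hR : R.IsHermitian) (htr : R.trace = 1) (hU : U * Uᴴ = 1) :
    expectationValue R (detectorStep R U B) =
      expectationValue R B - ‖(R * (B * U)).trace‖ ^ 2 := by
  rw [expectationValue, trace_mul_detectorStep_mul_conjTranspose hR htr hU, RCLike.star_def,
    RCLike.mul_conj, map_sub, expectationValue]
  norm_cast

lemma tendsto_expectationValue_atBot (hR : R.IsHermitian) (htr : R.trace = 1)
    (hS : S.IsHermitian) (hSS : S * S = 1) (hRS : 1 < ‖(R * S).trace‖)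
    {B : ℕ → Matrix ι ι 𝕜} (hB : ∀ n, B (n + 1) = detectorStep R (-S) (B n))
    (hB0 : (R * B 0).trace = 0) (hBS0 : (R * (B 0 * S)).trace ≠ 0) :
    Tendsto (fun n => expectationValue R (B n)) atTop atBot := by
  have htrB : ∀ n, (R * B n).trace = 0
    | 0 => hB0
    | n + 1 => hB n ▸ trace_mul_detectorStep htr
  have hgeom (n : ℕ) : (R * (B (n + 1) * S)).trace = (R * S).trace * (R * (B n * S)).trace := by
    rw [hB, detectorStep_neg, neg_mul, mul_neg, trace_neg,
      trace_mul_detectorStep_mul_of_mul_self_eq_one hSS, htrB, zero_sub, neg_neg]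
  have hnorm : Tendsto (fun n => ‖(R * (B n * S)).trace‖) atTop atTop :=
    tendsto_atTop_of_geom_le (norm_pos_iff.mpr hBS0) hRS fun n => by rw [hgeom, norm_mul]
  have hunitary : -S * (-S)ᴴ = 1 := by rw [conjTranspose_neg, hS.eq, neg_mul_neg, hSS]
  refine tendsto_atBot_of_succ_eq_sub ((tendsto_pow_atTop two_ne_zero).comp hnorm)
    (fun n => sq_nonneg _) fun n => ?_
  rw [hB, expectationValue_detectorStep hR htr hunitary, mul_neg, mul_neg, trace_neg, norm_neg]
  rfl

open scoped MatrixOrder in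
lemma trace_mul_detectorStep_mul_ne_zero (hR : R.IsHermitian) (hS : S.IsHermitian)
    (hSS : S * S = 1) (hRS : (R * S).PosSemidef) (hle : R ≤ R * S) (htrRS : 1 < (R * S).trace)
    (hB : B.PosSemidef) (hRB : R * B ≠ 0) : (R * (detectorStep R S B * S)).trace ≠ 0 := by
  have hcomm : R * S = S * R := by rw [← hRS.isHermitian.eq, conjTranspose_mul, hR.eq, hS.eq]
  have hRSB : R * S * B ≠ 0 := fun h => hRB <| by
    rw [← one_mul (R * B), ← hSS, Matrix.mul_assoc, ← Matrix.mul_assoc S R, ← hcomm, h, mul_zero]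
  have hcycle : (R * (B * S)).trace = (R * S * B).trace := by
    rw [hcomm, ← Matrix.mul_assoc, trace_mul_comm, ← Matrix.mul_assoc]
  rw [trace_mul_detectorStep_mul_of_mul_self_eq_one hSS, hcycle]
  exact (sub_neg.mpr (trace_mul_lt_trace_mul_trace_mul hle hRS hB hRSB htrRS)).ne

end DetectorStep

open scoped MatrixOrder in
theorem example_sequence_detects_general {ι 𝕜 : Type*} [Fintype ι] [DecidableEq ι] [RCLike 𝕜]
    {R P : Matrix ι ι 𝕜} (htr : R.trace = 1) (hNPSD : ¬ R.PosSemidef) (hP : IsStarProjection P)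
    (hpos : (R * (1 - P)).PosSemidef) (hneg : (-(R * P)).PosSemidef)
    {B U : ℕ → Matrix ι ι 𝕜} (hB1 : (B 1).PosSemidef) (hRB1 : R * B 1 ≠ 0)
    (hU1 : U 1 = (1 - P) - P) (hU2 : ∀ n, 2 ≤ n → U n = P - (1 - P))
    (hB : ∀ n, 1 ≤ n → B (n + 1) = detectorStep R (U n) (B n)) :
    Tendsto (fun n => expectationValue R (B n)) atTop atBot := by
  have hR := isHermitian_of_mul_one_sub_of_mul hpos hneg
  have hSS := one_sub_sub_mul_self_eq_one hP.isIdempotentElem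
  have hS : (1 - P - P).IsHermitian := hP.one_sub.isSelfAdjoint.sub hP.isSelfAdjoint
  have habs := posSemidef_mul_one_sub_sub hpos hneg
  have hlt : R < R * (1 - P - P) := (le_mul_one_sub_sub hneg).lt_of_ne fun h => hNPSD (h ▸ habs)
  have htr_abs : 1 < (R * (1 - P - P)).trace := htr ▸ trace_lt_trace hlt
  have hB2 : B 2 = detectorStep R (1 - P - P) (B 1) := hU1 ▸ hB 1 le_rfl
  refine (tendsto_add_atTop_iff_nat 2).mp <| tendsto_expectationValue_atBot hR htr hS hSS
    (one_lt_norm_of_one_lt htr_abs) (B := fun n => B (n + 2)) (fun n => ?_) ?_ ?_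
  · rw [neg_sub, ← hU2 (n + 2) (by omega)]
    exact hB (n + 2) (by omega)
  · exact hB2 ▸ trace_mul_detectorStep htr
  · exact hB2 ▸ trace_mul_detectorStep_mul_ne_zero hR hS hSS habs hlt.le htr_abs hB1 hRB1

/-- **Detection for the example sequence.**
Let `R` be Hermitian with `trace R = 1` and not positive semidefinite, let `B 1` be
positive definite, and let `Pneg` be the orthogonal projection onto the span of the
eigenvectors of `R` with negative eigenvalues (characterized by: `Pneg` is a Hermitian
idempotent commuting with `R`, `R ≥ 0` on the range of `𝟙 - Pneg`, `-R ≥ 0` on the range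
of `Pneg`, and `R` is injective on the range of `Pneg`).  For the unitaries
`U 1 = P₊ - P₋`, `U n = P₋ - P₊` (`n ≥ 2`) and the iteration
`B (n+1) = B n * U n - trace(R * B n * U n) • 𝟙`, the expectation values
`w n = trace(R * B n * B nᴴ)` diverge to `-∞`; in particular there exists `N₀` such that
`w n < 0` for all `n ≥ N₀`. -/
theorem example_sequence_detects
    {d : ℕ} (hd : 1 ≤ d)
    (R : Matrix (Fin d) (Fin d) ℂ) (hR : R.IsHermitian) (htr : R.trace = 1)
    (hNPSD : ¬ R.PosSemidef)
    (Pneg : Matrix (Fin d) (Fin d) ℂ)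
    (hP1 : Pnegᴴ = Pneg) (hP2 : Pneg * Pneg = Pneg) (hP3 : R * Pneg = Pneg * R)
    (hP4 : (R * (1 - Pneg)).PosSemidef) (hP5 : (-(R * Pneg)).PosSemidef)
    (hP6 : ∀ x : Fin d → ℂ, Pneg *ᵥ x = x → R *ᵥ x = 0 → x = 0)
    (B U : ℕ → Matrix (Fin d) (Fin d) ℂ)
    (hB1 : (B 1).PosDef)
    (hU1 : U 1 = (1 - Pneg) - Pneg)
    (hU2 : ∀ n, 2 ≤ n → U n = Pneg - (1 - Pneg))
    (hB : ∀ n, 1 ≤ n →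
      B (n + 1) = B n * U n
        - ((R * (B n * U n)).trace) • (1 : Matrix (Fin d) (Fin d) ℂ)) :
    Tendsto (fun n => ((R * (B n * (B n)ᴴ)).trace).re) atTop atBot ∧
      ∃ N₀ : ℕ, ∀ n, N₀ ≤ n → ((R * (B n * (B n)ᴴ)).trace).re < 0 := by
  have hRB1 : R * B 1 ≠ 0 := fun h => hNPSD (hB1.isUnit.mul_left_eq_zero.mp h ▸ .zero)
  have hw : Tendsto (fun n => ((R * (B n * (B n)ᴴ)).trace).re) atTop atBot :=
    example_sequence_detects_general htr hNPSD ⟨hP2, hP1⟩ hP4 hP5 hB1.posSemidef hRB1 hU1 hU2 hB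
  exact ⟨hw, eventually_atTop.mp (hw.eventually_lt_atBot 0)⟩
end

section
/- Completeness of PPT witnesses: let ρ be a Hermitian complex matrix indexed by ι × κ whose partial transpose ρ^Γ is NOT positive semidefinite. Then there exists a matrix B indexed by ι × κ such that trace(ρ · (B B†)^Γ) < 0; i.e., every NPT state is detected by a witness of the form (B B†)^Γ. -/
open Matrix ComplexOrder

/-- The partial transpose (with respect to the second tensor factor) of a complex matrix
indexed by `ι × κ`: `(ρ^Γ)_{(i,j),(k,l)} = ρ_{(i,l),(k,j)}`. -/
def partialTranspose {ι κ : Type*} (ρ : Matrix (ι × κ) (ι × κ) ℂ) :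
    Matrix (ι × κ) (ι × κ) ℂ :=
  Matrix.of fun p q => ρ (p.1, q.2) (q.1, p.2)

/-! Partial transposition is self-adjoint for the pairing `(ρ, σ) ↦ tr (ρ * σ)`, so testing `ρ`
against `(x x†)^Γ` evaluates the quadratic form of `ρ^Γ` at `x`. Since `ρ^Γ` is Hermitian, this form
is real, hence negative at some `x` when `ρ^Γ` is not positive semidefinite. It remains to write
`x x†` as `B B†`, with `B` the square matrix whose only nonzero column is `x`. -/

section PartialTranspose

variable {ι κ : Type*}

theorem conjTranspose_partialTranspose (ρ : Matrix (ι × κ) (ι × κ) ℂ) :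
    (partialTranspose ρ)ᴴ = partialTranspose ρᴴ :=
  rfl

theorem isHermitian_partialTranspose {ρ : Matrix (ι × κ) (ι × κ) ℂ} (hρ : ρ.IsHermitian) :
    (partialTranspose ρ).IsHermitian := by
  rw [Matrix.IsHermitian, conjTranspose_partialTranspose, hρ.eq]

theorem trace_mul_partialTranspose [Fintype ι] [Fintype κ] (ρ σ : Matrix (ι × κ) (ι × κ) ℂ) :
    (ρ * partialTranspose σ).trace = (partialTranspose ρ * σ).trace := by
  calc (ρ * partialTranspose σ).trace
      = ∑ i, ∑ j, ∑ k, ∑ l, ρ (i, j) (k, l) * σ (k, j) (i, l) := by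
        simp only [trace, diag_apply, mul_apply, partialTranspose, of_apply, Fintype.sum_prod_type]
    _ = ∑ i, ∑ k, ∑ j, ∑ l, ρ (i, j) (k, l) * σ (k, j) (i, l) :=
        Fintype.sum_congr _ _ fun _ => Finset.sum_comm
    _ = ∑ i, ∑ k, ∑ l, ∑ j, ρ (i, j) (k, l) * σ (k, j) (i, l) :=
        Fintype.sum_congr _ _ fun _ => Fintype.sum_congr _ _ fun _ => Finset.sum_comm
    _ = ∑ i, ∑ l, ∑ k, ∑ j, ρ (i, j) (k, l) * σ (k, j) (i, l) :=
        Fintype.sum_congr _ _ fun _ => Finset.sum_comm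
    _ = (partialTranspose ρ * σ).trace := by
        simp only [trace, diag_apply, mul_apply, partialTranspose, of_apply, Fintype.sum_prod_type]

end PartialTranspose

theorem trace_mul_vecMulVec {m n R : Type*} [Fintype m] [Fintype n] [NonUnitalCommSemiring R]
    (A : Matrix m n R) (x : n → R) (y : m → R) :
    (A * vecMulVec x y).trace = y ⬝ᵥ A *ᵥ x := by
  rw [mul_vecMulVec, trace_vecMulVec, dotProduct_comm]

theorem vecMulVec_single_one_mul_conjTranspose_self {m n R : Type*} [Fintype n] [DecidableEq n]
    [Semiring R] [StarRing R] (x : m → R) (j : n) :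
    vecMulVec x (Pi.single j 1) * (vecMulVec x (Pi.single j 1))ᴴ = vecMulVec x (star x) := by
  rw [conjTranspose_vecMulVec, vecMulVec_mul_vecMulVec, Pi.star_single, star_one,
    single_one_dotProduct, Pi.single_eq_same, one_smul]

theorem not_posSemidef_iff_exists_dotProduct_mulVec_neg {n 𝕜 : Type*} [Fintype n] [RCLike 𝕜]
    {A : Matrix n n 𝕜} (hA : A.IsHermitian) :
    ¬ A.PosSemidef ↔ ∃ x : n → 𝕜, star x ⬝ᵥ A *ᵥ x < 0 := by
  have not_nonneg_iff_neg (x : n → 𝕜) : ¬ 0 ≤ star x ⬝ᵥ A *ᵥ x ↔ star x ⬝ᵥ A *ᵥ x < 0 := by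
    have im_eq_zero := hA.im_star_dotProduct_mulVec_self x
    rw [RCLike.nonneg_iff, RCLike.neg_iff, and_iff_left im_eq_zero, and_iff_left im_eq_zero, not_le]
  simp only [posSemidef_iff_dotProduct_mulVec, hA, true_and, not_forall, not_nonneg_iff_neg]

/-- **Completeness of PPT witnesses.**
If `ρ` is a Hermitian matrix indexed by `ι × κ` whose partial transpose is not positive
semidefinite, then there is a matrix `B` with `trace(ρ * (B * Bᴴ)^Γ) < 0`: every NPT
state is detected by a witness of the form `(B * Bᴴ)^Γ`. -/
theorem npt_state_detected_by_witness
    {ι κ : Type*} [Fintype ι] [Fintype κ] [DecidableEq ι] [DecidableEq κ]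
    [Nonempty ι] [Nonempty κ]
    (ρ : Matrix (ι × κ) (ι × κ) ℂ) (hρ : ρ.IsHermitian)
    (hNPT : ¬ (partialTranspose ρ).PosSemidef) :
    ∃ B : Matrix (ι × κ) (ι × κ) ℂ,
      (ρ * partialTranspose (B * Bᴴ)).trace < 0 := by
  obtain ⟨x, hx⟩ := (not_posSemidef_iff_exists_dotProduct_mulVec_neg
    (isHermitian_partialTranspose hρ)).mp hNPT
  obtain ⟨q⟩ : Nonempty (ι × κ) := inferInstance
  refine ⟨vecMulVec x (Pi.single q 1), ?_⟩
  calc (ρ * partialTranspose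
          (vecMulVec x (Pi.single q 1) * (vecMulVec x (Pi.single q 1))ᴴ)).trace
      = (ρ * partialTranspose (vecMulVec x (star x))).trace := by
        rw [vecMulVec_single_one_mul_conjTranspose_self]
    _ = (partialTranspose ρ * vecMulVec x (star x)).trace := trace_mul_partialTranspose _ _
    _ = star x ⬝ᵥ partialTranspose ρ *ᵥ x := trace_mul_vecMulVec _ _ _
    _ < 0 := hx
end

section
/- Haar integral identity (consequence of the Peter–Weyl theorem): let μ be the Haar probability measure on the compact group U(d) of d×d complex unitary matrices. Then for all d×d complex matrices A and B, d · ∫_{U(d)} trace(A·U) · trace(B·U†) dμ(U) = trace(A·B). -/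
open Matrix MeasureTheory

/-!
Averaging `U * M * Uᴴ` over the group gives a matrix that commutes with every unitary matrix. Every
matrix unit `Eᵢⱼ` is a linear combination of products of coordinate sign changes and transpositions,
so this average is scalar, and comparing traces it is `(M.trace / d) • 1`. The integrand of the
theorem is `∑ i, ∑ j, (A * U * Eᵢⱼ * Uᴴ * B) i j`; averaging replaces `U * Eᵢⱼ * Uᴴ` by `δᵢⱼ / d`,
which leaves `(A * B).trace / d`.
-/

section Span

variable {n R : Type*} [Fintype n] [DecidableEq n]

lemma isStarProjection_single [Semiring R] [StarRing R] (i : n) :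
    IsStarProjection (single i i (1 : R)) where
  isIdempotentElem := by simp [IsIdempotentElem]
  isSelfAdjoint := by simp [IsSelfAdjoint, star_eq_conjTranspose]

variable [CommRing R] [StarRing R]

lemma permMatrix_mem_unitaryGroup (σ : Equiv.Perm n) : σ.permMatrix R ∈ unitaryGroup n R := by
  rw [mem_unitaryGroup_iff, star_eq_conjTranspose, conjTranspose_permMatrix, ← permMatrix_mul,
    inv_mul_cancel, permMatrix_one]

variable [Invertible (2 : R)]

lemma single_mem_span_unitaryGroup (i j : n) :
    single i j (1 : R) ∈ Submodule.span R (unitaryGroup n R : Set (Matrix n n R)) := by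
  set E : Matrix n n R := single i i 1
  set P : Matrix n n R := (Equiv.swap i j).permMatrix R
  have hP : P ∈ unitaryGroup n R := permMatrix_mem_unitaryGroup _
  -- `2 * E - 1` is a diagonal sign matrix.
  have hEP : (2 * E - 1) * P ∈ unitaryGroup n R :=
    mul_mem (isStarProjection_single i).two_mul_sub_one_mem_unitary hP
  have hsingle : single i j (1 : R) = E * P := by
    rw [PEquiv.mul_toMatrix_toPEquiv]
    ext k l
    simp [E, single_apply, ← Equiv.symm_apply_eq]
  have hcomb : single i j (1 : R) = (⅟2 : R) • ((2 * E - 1) * P + P) := by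
    rw [hsingle, sub_one_mul, sub_add_cancel, two_mul, ← two_smul R, smul_mul_assoc, smul_smul,
      invOf_mul_self, one_smul]
  rw [hcomb]
  exact Submodule.smul_mem _ _ (add_mem (Submodule.subset_span hEP) (Submodule.subset_span hP))

theorem mem_range_scalar_of_commute_unitaryGroup {M : Matrix n n R}
    (hM : ∀ U ∈ unitaryGroup n R, Commute U M) : M ∈ Set.range (scalar n) := by
  have hspan {X : Matrix n n R}
      (hX : X ∈ Submodule.span R (unitaryGroup n R : Set (Matrix n n R))) : Commute X M := by
    induction hX using Submodule.span_induction with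
    | mem U hU => exact hM U hU
    | zero => exact Commute.zero_left M
    | add X Y _ _ hX hY => exact hX.add_left hY
    | smul c X _ hX => exact hX.smul_left c
  exact mem_range_scalar_of_commute_single fun i j _ => hspan (single_mem_span_unitaryGroup i j)

end Span

section Twirl

variable {n 𝕜 : Type*} [Fintype n] [DecidableEq n] [RCLike 𝕜]

instance compactSpace_unitaryGroup : CompactSpace (unitaryGroup n 𝕜) := by
  have hclosed : IsClosed (unitaryGroup n 𝕜 : Set (Matrix n n 𝕜)) := isClosed_unitary
  have hcompact : IsCompact (Set.univ.pi fun _ => Set.univ.pi fun _ => Metric.closedBall 0 1 :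
      Set (Matrix n n 𝕜)) :=
    isCompact_univ_pi fun _ => isCompact_univ_pi fun _ => isCompact_closedBall 0 1
  exact isCompact_iff_compactSpace.mp <| hcompact.of_isClosed_subset hclosed fun U hU i _ j _ =>
    mem_closedBall_zero_iff.mpr (entry_norm_bound_of_unitary hU i j)

variable [MeasurableSpace (unitaryGroup n 𝕜)]

/-- The twirl (average over unitary conjugation) `∫ U M U† dμ(U)` of a matrix `M`. Its values on
matrix units determine the integrals of degree one in `U` and in `U†`. The integral is taken
entrywise, which avoids choosing a norm on matrices. -/
noncomputable def unitaryTwirl (μ : Measure (unitaryGroup n 𝕜)) (M : Matrix n n 𝕜) :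
    Matrix n n 𝕜 :=
  of fun i j => ∫ U : unitaryGroup n 𝕜, (U * M * (U : Matrix n n 𝕜)ᴴ) i j ∂μ

variable [BorelSpace (unitaryGroup n 𝕜)] (μ : Measure (unitaryGroup n 𝕜))

lemma integrable_map_unitary_conj [IsFiniteMeasure μ] (f : Matrix n n 𝕜 →ₗ[𝕜] 𝕜)
    (M : Matrix n n 𝕜) :
    Integrable (fun U : unitaryGroup n 𝕜 => f (U * M * (U : Matrix n n 𝕜)ᴴ)) μ :=
  have hf : Continuous f := f.continuous_of_finiteDimensional
  Continuous.integrable_of_hasCompactSupport (by fun_prop) (.of_compactSpace _)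

lemma map_unitaryTwirl_eq_integral [IsFiniteMeasure μ] (f : Matrix n n 𝕜 →ₗ[𝕜] 𝕜)
    (M : Matrix n n 𝕜) :
    f (unitaryTwirl μ M) = ∫ U : unitaryGroup n 𝕜, f (U * M * (U : Matrix n n 𝕜)ᴴ) ∂μ := by
  have hint (i j : n) : Integrable
      (fun U : unitaryGroup n 𝕜 => (U * M * (U : Matrix n n 𝕜)ᴴ) i j * f (single i j 1)) μ :=
    (integrable_map_unitary_conj μ (entryLinearMap 𝕜 𝕜 i j) M).mul_const _
  have hf (X : Matrix n n 𝕜) : f X = ∑ i, ∑ j, X i j * f (single i j 1) := by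
    conv_lhs => rw [matrix_eq_sum_single X]
    simp_rw [map_sum, ← smul_eq_mul (X _ _), ← map_smul, smul_single, smul_eq_mul, mul_one]
  simp_rw [hf (_ * _)]
  rw [hf, integral_finsetSum _ fun i _ => integrable_finsetSum _ fun j _ => hint i j]
  simp_rw [integral_finsetSum _ fun j _ => hint _ j, integral_mul_const, unitaryTwirl, of_apply]

lemma trace_unitaryTwirl [IsProbabilityMeasure μ] (M : Matrix n n 𝕜) :
    (unitaryTwirl μ M).trace = M.trace := by
  have hconj (U : unitaryGroup n 𝕜) : (U * M * (U : Matrix n n 𝕜)ᴴ).trace = M.trace := by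
    rw [trace_mul_cycle, ← star_eq_conjTranspose, Unitary.coe_star_mul_self, one_mul]
  simpa [hconj] using map_unitaryTwirl_eq_integral μ (traceLinearMap n 𝕜 𝕜) M

lemma mul_unitaryTwirl_mul_apply [IsFiniteMeasure μ] (A B M : Matrix n n 𝕜) (i j : n) :
    (A * unitaryTwirl μ M * B) i j =
      ∫ U : unitaryGroup n 𝕜, (A * (U * M * (U : Matrix n n 𝕜)ᴴ) * B) i j ∂μ :=
  map_unitaryTwirl_eq_integral μ (entryLinearMap 𝕜 𝕜 i j ∘ₗ LinearMap.mulLeftRight 𝕜 (A, B)) M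

lemma unitary_conj_unitaryTwirl [IsFiniteMeasure μ] [μ.IsMulLeftInvariant]
    (V : unitaryGroup n 𝕜) (M : Matrix n n 𝕜) :
    V * unitaryTwirl μ M * (V : Matrix n n 𝕜)ᴴ = unitaryTwirl μ M := by
  ext i j
  have hconj (U : unitaryGroup n 𝕜) :
      V * ((U : Matrix n n 𝕜) * M * (U : Matrix n n 𝕜)ᴴ) * (V : Matrix n n 𝕜)ᴴ =
      (V * U : unitaryGroup n 𝕜) * M * ((V * U : unitaryGroup n 𝕜) : Matrix n n 𝕜)ᴴ := by
    simp only [UnitaryGroup.mul_val, conjTranspose_mul, Matrix.mul_assoc]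
  simp_rw [mul_unitaryTwirl_mul_apply, hconj]
  exact integral_mul_left_eq_self
    (fun U : unitaryGroup n 𝕜 => (U * M * (U : Matrix n n 𝕜)ᴴ) i j) V

lemma commute_unitaryTwirl [IsFiniteMeasure μ] [μ.IsMulLeftInvariant] {U : Matrix n n 𝕜}
    (hU : U ∈ unitaryGroup n 𝕜) (M : Matrix n n 𝕜) : Commute U (unitaryTwirl μ M) := by
  have hinv := congrArg (· * U) (unitary_conj_unitaryTwirl μ ⟨U, hU⟩ M)
  rwa [Matrix.mul_assoc, ← star_eq_conjTranspose, mem_unitaryGroup_iff'.mp hU, mul_one] at hinv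

theorem card_smul_unitaryTwirl [IsProbabilityMeasure μ] [μ.IsMulLeftInvariant]
    (M : Matrix n n 𝕜) :
    (Fintype.card n : 𝕜) • unitaryTwirl μ M = M.trace • (1 : Matrix n n 𝕜) := by
  let _ : Invertible (2 : 𝕜) := invertibleOfNonzero two_ne_zero
  obtain ⟨c, hc⟩ :=
    mem_range_scalar_of_commute_unitaryGroup fun U hU => commute_unitaryTwirl μ hU M
  rw [← trace_unitaryTwirl μ M, ← hc, scalar_apply, ← smul_one_eq_diagonal, trace_smul, trace_one,
    smul_smul, smul_eq_mul, mul_comm]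

end Twirl

lemma trace_mul_trace_eq_sum {m n R : Type*} [Fintype m] [Fintype n] [DecidableEq m]
    [DecidableEq n] [NonAssocSemiring R] (P : Matrix m m R) (Q : Matrix n n R) :
    P.trace * Q.trace = ∑ i, ∑ j, (P * (single i j 1 : Matrix m n R) * Q) i j := by
  simp only [trace, diag_apply, Finset.sum_mul_sum]
  simp [Matrix.mul_apply, single_apply, ite_and]

theorem haar_integral_trace_identity_general
    {n 𝕜 : Type*} [Fintype n] [DecidableEq n] [RCLike 𝕜]
    [MeasurableSpace (unitaryGroup n 𝕜)] [BorelSpace (unitaryGroup n 𝕜)]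
    (μ : Measure (unitaryGroup n 𝕜)) [μ.IsMulLeftInvariant] [IsProbabilityMeasure μ]
    (A B : Matrix n n 𝕜) :
    (Fintype.card n : 𝕜) * ∫ U : unitaryGroup n 𝕜,
        (A * (U : Matrix n n 𝕜)).trace * (B * (U : Matrix n n 𝕜)ᴴ).trace ∂μ =
      (A * B).trace := by
  have hint (i j : n) : Integrable (fun U : unitaryGroup n 𝕜 =>
      (A * (U * (single i j 1 : Matrix n n 𝕜) * (U : Matrix n n 𝕜)ᴴ) * B) i j) μ :=
    integrable_map_unitary_conj μ
      (entryLinearMap 𝕜 𝕜 i j ∘ₗ LinearMap.mulLeftRight 𝕜 (A, B)) _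
  calc (Fintype.card n : 𝕜) * ∫ U : unitaryGroup n 𝕜,
        (A * (U : Matrix n n 𝕜)).trace * (B * (U : Matrix n n 𝕜)ᴴ).trace ∂μ
    _ = Fintype.card n * ∫ U : unitaryGroup n 𝕜,
        ∑ i, ∑ j, (A * (U * (single i j 1 : Matrix n n 𝕜) * (U : Matrix n n 𝕜)ᴴ) * B) i j ∂μ := by
      simp_rw [trace_mul_comm B, trace_mul_trace_eq_sum, Matrix.mul_assoc]
    _ = Fintype.card n * ∑ i, ∑ j, (A * unitaryTwirl μ (single i j 1) * B) i j := by
      rw [integral_finsetSum _ fun i _ => integrable_finsetSum _ fun j _ => hint i j]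
      simp_rw [integral_finsetSum _ fun j _ => hint _ j, mul_unitaryTwirl_mul_apply]
    _ = ∑ i, ∑ j, (A * ((Fintype.card n : 𝕜) • unitaryTwirl μ (single i j 1)) * B) i j := by
      simp [Finset.mul_sum]
    _ = ∑ i, ∑ j, (single i j (1 : 𝕜)).trace * (A * B) i j := by
      simp [card_smul_unitaryTwirl]
    _ = (A * B).trace := by
      simp [trace, single_apply, ite_and]

/-- **Haar integral identity (consequence of the Peter–Weyl theorem).**
Let `μ` be the Haar probability measure on the compact group `U(d)` of `d × d` complex
unitary matrices.  Then for all `d × d` complex matrices `A` and `B`,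
`d * ∫ trace(A * U) * trace(B * U†) dμ(U) = trace(A * B)`. -/
theorem haar_integral_trace_identity
    {d : ℕ}
    [MeasurableSpace (Matrix.unitaryGroup (Fin d) ℂ)]
    [BorelSpace (Matrix.unitaryGroup (Fin d) ℂ)]
    (μ : Measure (Matrix.unitaryGroup (Fin d) ℂ))
    [μ.IsHaarMeasure] [IsProbabilityMeasure μ]
    (A B : Matrix (Fin d) (Fin d) ℂ) :
    (d : ℂ) * ∫ U : Matrix.unitaryGroup (Fin d) ℂ,
        (A * (U : Matrix (Fin d) (Fin d) ℂ)).trace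
          * (B * ((U : Matrix (Fin d) (Fin d) ℂ))ᴴ).trace ∂μ
      = (A * B).trace := by
  simpa using haar_integral_trace_identity_general μ A B
end

section
/- Trace bound for the averaged iteration operators: let R be a Hermitian d×d complex matrix with trace(R) = 1, and define A₁ = R and A_{n+1} = A_n + (1/d)·[trace(A_n)·R² − (R·A_n + A_n·R)] for n ≥ 1. Then trace(A_n) ≤ 1 for every n ≥ 1. -/
open Matrix ComplexOrder

/-!
Write `Φ(A) = tr(A) R² - (R A + A R)` for the increment. The trace decreases because every
increment has the form `Φ(Aₙ) = -R Gₙ R` with `Gₙ` positive semidefinite. Initially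
`Φ(R) = -(2 - tr R) R²`, so `G₁ = (2 - tr R) 1`. Since `Φ(R G R) = R Ψ(G) R` for
`Ψ(G) = tr(R G R) 1 - (R G + G R)`, a step of size `ε` sends `G` to
`G + ε Ψ(G) = (1 - ε R) G (1 - ε R) + ε (tr(R G R) 1 - ε R G R)`,
and this is positive semidefinite for `0 ≤ ε ≤ 1` because `P ≤ tr(P) 1` whenever `P ≥ 0`.
-/

section Increments

variable {m α : Type*} [Fintype m] [DecidableEq m] [CommRing α]

/-- The increment `Φ(A) = tr(A) R² - (R A + A R)` of the averaged iteration with parameter `R`,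
before multiplication by the step size. -/
def averagedIncrement (R A : Matrix m m α) : Matrix m m α :=
  A.trace • R ^ 2 - (R * A + A * R)

/-- The adjoint `Ψ(G) = tr(R² G) 1 - (R G + G R)` of `averagedIncrement R` for the pairing
`(A, G) ↦ tr(A G)`; it governs the evolution of the matrices `G` in increments `-R G R`.
The coefficient is written `tr(R G R)`, the trace of a congruence of `G`. -/
def dualIncrement (R G : Matrix m m α) : Matrix m m α :=
  (R * G * R).trace • 1 - (R * G + G * R)

lemma averagedIncrement_add_smul (R A B : Matrix m m α) (c : α) :
    averagedIncrement R (A + c • B) = averagedIncrement R A + c • averagedIncrement R B := by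
  simp only [averagedIncrement, trace_add, trace_smul, mul_add, add_mul, mul_smul_comm,
    smul_mul_assoc, smul_eq_mul]
  module

lemma averagedIncrement_neg (R A : Matrix m m α) :
    averagedIncrement R (-A) = -averagedIncrement R A := by
  simp only [averagedIncrement, trace_neg, mul_neg, neg_mul]
  module

lemma averagedIncrement_self (R : Matrix m m α) :
    averagedIncrement R R = -(R * ((2 - R.trace) • 1) * R) := by
  simp only [averagedIncrement, mul_smul_comm, smul_mul_assoc, mul_one, sq]
  module

lemma averagedIncrement_mul_mul_self (R G : Matrix m m α) :
    averagedIncrement R (R * G * R) = R * dualIncrement R G * R := by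
  simp only [averagedIncrement, dualIncrement, mul_sub, sub_mul, mul_add, add_mul,
    mul_smul_comm, smul_mul_assoc, mul_one, sq, mul_assoc]

lemma averagedIncrement_add_smul_averagedIncrement {R A G : Matrix m m α} (c : α)
    (hA : averagedIncrement R A = -(R * G * R)) :
    averagedIncrement R (A + c • averagedIncrement R A) =
      -(R * (G + c • dualIncrement R G) * R) := by
  rw [averagedIncrement_add_smul, hA, averagedIncrement_neg, averagedIncrement_mul_mul_self,
    mul_add, add_mul, mul_smul_comm, smul_mul_assoc, smul_neg, neg_add]

lemma add_smul_dualIncrement_eq (R G : Matrix m m α) (c : α) :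
    G + c • dualIncrement R G =
      (1 - c • R) * G * (1 - c • R) + c • ((R * G * R).trace • 1 - c • (R * G * R)) := by
  simp only [dualIncrement, mul_sub, sub_mul, mul_one, one_mul, mul_smul_comm, smul_mul_assoc]
  module

end Increments

section PosSemidef

variable {m 𝕜 : Type*} [Fintype m] [RCLike 𝕜]

lemma posSemidef_mul_mul_self {R G : Matrix m m 𝕜} (hR : R.IsHermitian) (hG : G.PosSemidef) :
    (R * G * R).PosSemidef := by
  simpa only [hR.eq] using hG.conjTranspose_mul_mul_same R

variable [DecidableEq m]

open scoped MatrixOrder in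
lemma posSemidef_trace_smul_one_sub {P : Matrix m m 𝕜} (hP : P.PosSemidef) :
    (P.trace • 1 - P).PosSemidef := by
  have spectrum_le : ∀ x ∈ spectrum ℝ P, x ≤ ∑ i, hP.isHermitian.eigenvalues i := by
    rw [hP.isHermitian.spectrum_real_eq_range_eigenvalues]
    rintro _ ⟨i, rfl⟩
    exact Finset.single_le_sum (fun j _ ↦ hP.eigenvalues_nonneg j) (Finset.mem_univ i)
  rw [hP.isHermitian.trace_eq_sum_eigenvalues, ← RCLike.ofReal_sum, ← RCLike.algebraMap_eq_ofReal,
    algebraMap_smul, ← Algebra.algebraMap_eq_smul_one, ← Matrix.le_iff]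
  exact le_algebraMap_of_spectrum_le spectrum_le hP.isHermitian.isSelfAdjoint

lemma posSemidef_add_smul_dualIncrement {R G : Matrix m m 𝕜} {ε : 𝕜} (hR : R.IsHermitian)
    (hG : G.PosSemidef) (hε₀ : 0 ≤ ε) (hε₁ : ε ≤ 1) :
    (G + ε • dualIncrement R G).PosSemidef := by
  have hP : (R * G * R).PosSemidef := posSemidef_mul_mul_self hR hG
  have one_sub_isHermitian : (1 - ε • R).IsHermitian :=
    isHermitian_one.sub (hR.smul (.of_nonneg hε₀))
  have remainder : ((R * G * R).trace • 1 - ε • (R * G * R)).PosSemidef := by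
    convert (posSemidef_trace_smul_one_sub hP).add (hP.smul (sub_nonneg.2 hε₁)) using 1
    module
  rw [add_smul_dualIncrement_eq]
  exact (posSemidef_mul_mul_self one_sub_isHermitian hG).add (remainder.smul hε₀)

lemma exists_posSemidef_averagedIncrement_eq {R : Matrix m m 𝕜} {ε : 𝕜} (hR : R.IsHermitian)
    (htr : R.trace ≤ 2) (hε₀ : 0 ≤ ε) (hε₁ : ε ≤ 1) {A : ℕ → Matrix m m 𝕜} (hA1 : A 1 = R)
    (hArec : ∀ n, 1 ≤ n → A (n + 1) = A n + ε • averagedIncrement R (A n)) {n : ℕ} (hn : 1 ≤ n) :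
    ∃ G : Matrix m m 𝕜, G.PosSemidef ∧ averagedIncrement R (A n) = -(R * G * R) := by
  induction n, hn using Nat.le_induction with
  | base => exact ⟨_, PosSemidef.one.smul (sub_nonneg.2 htr), hA1 ▸ averagedIncrement_self R⟩
  | succ n hn ih =>
    obtain ⟨G, hG, hAG⟩ := ih
    exact ⟨_, posSemidef_add_smul_dualIncrement hR hG hε₀ hε₁,
      hArec n hn ▸ averagedIncrement_add_smul_averagedIncrement ε hAG⟩

theorem antitoneOn_averaged_iteration_trace {R : Matrix m m 𝕜} {ε : 𝕜} (hR : R.IsHermitian)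
    (htr : R.trace ≤ 2) (hε₀ : 0 ≤ ε) (hε₁ : ε ≤ 1) {A : ℕ → Matrix m m 𝕜} (hA1 : A 1 = R)
    (hArec : ∀ n, 1 ≤ n → A (n + 1) = A n + ε • averagedIncrement R (A n)) :
    AntitoneOn (fun n ↦ (A n).trace) (Set.Ici 1) := by
  refine antitoneOn_nat_Ici_of_succ_le fun n hn ↦ ?_
  obtain ⟨G, hG, hAG⟩ := exists_posSemidef_averagedIncrement_eq hR htr hε₀ hε₁ hA1 hArec hn
  have decrement_nonneg : 0 ≤ ε * (R * G * R).trace :=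
    mul_nonneg hε₀ (posSemidef_mul_mul_self hR hG).trace_nonneg
  calc (A (n + 1)).trace = (A n + ε • averagedIncrement R (A n)).trace := by rw [hArec n hn]
    _ = (A n).trace - ε * (R * G * R).trace := by
        rw [hAG, trace_add, trace_smul, trace_neg, smul_eq_mul, mul_neg, sub_eq_add_neg]
    _ ≤ (A n).trace := sub_le_self _ decrement_nonneg

theorem averaged_iteration_trace_le_one_general {R : Matrix m m 𝕜} {ε : 𝕜} (hR : R.IsHermitian)
    (htr : R.trace ≤ 2) (hε₀ : 0 ≤ ε) (hε₁ : ε ≤ 1) {A : ℕ → Matrix m m 𝕜} (hA1 : A 1 = R)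
    (hArec : ∀ n, 1 ≤ n → A (n + 1) = A n + ε • ((A n).trace • R ^ 2 - (R * A n + A n * R))) :
    ∀ n, 1 ≤ n → (A n).trace ≤ R.trace := fun _ hn ↦
  (antitoneOn_averaged_iteration_trace hR htr hε₀ hε₁ hA1 hArec Set.self_mem_Ici hn hn).trans_eq
    (congrArg trace hA1)

end PosSemidef

/-- **Trace bound for the averaged-iteration operators.**
Let `R` be a Hermitian `d × d` complex matrix with `trace R = 1`, and let `A 1 = R`,
`A (n+1) = A n + (1/d) • (trace(A n) • R² - (R * A n + A n * R))` for `n ≥ 1`.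
Then `trace(A n) ≤ 1` for every `n ≥ 1`. -/
theorem averaged_iteration_trace_le_one
    {d : ℕ}
    (R : Matrix (Fin d) (Fin d) ℂ) (hR : R.IsHermitian) (htr : R.trace = 1)
    (A : ℕ → Matrix (Fin d) (Fin d) ℂ)
    (hA1 : A 1 = R)
    (hArec : ∀ n, 1 ≤ n →
      A (n + 1) = A n + ((d : ℂ))⁻¹ • ((A n).trace • R ^ 2 - (R * A n + A n * R))) :
    ∀ n, 1 ≤ n → (A n).trace ≤ 1 := by
  have step_le_one : (d : ℂ)⁻¹ ≤ 1 := by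
    simpa using Complex.real_le_real.2 (Nat.cast_inv_le_one d)
  exact htr ▸ averaged_iteration_trace_le_one_general hR (htr.trans_le one_le_two)
    (by positivity) step_le_one hA1 hArec
end

section
/- Eigenvalue recursion for the averaged iteration operators: let R be a Hermitian d×d complex matrix with trace(R) = 1 and define A₁ = R, A_{n+1} = A_n + (1/d)·[trace(A_n)·R² − (R·A_n + A_n·R)]. If ψ is an eigenvector of R with eigenvalue λ, then ψ is an eigenvector of A_n for every n ≥ 1, and the corresponding eigenvalues a_n satisfy a₁ = λ and a_{n+1} = a_n·(1 − 2λ/d) + trace(A_n)·λ²/d. -/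
open Matrix

/-!
If `R ψ = l ψ` and `M ψ = a ψ`, then each of `R²`, `R M`, `M R` acts on `ψ` as a scalar, so one
step `M ↦ M + c (tr M · R² - (R M + M R))` sends the eigenvalue `a` to
`a (1 - 2 l c) + (tr M) l² c`. The step preserves Hermiticity, so every trace that occurs is real
and the eigenvalue recursion takes place in `ℝ`.
-/

section

variable {n k K : Type*} [Fintype n] [CommRing K]

/-- The map `A_m ↦ A_{m+1}` of the averaged iteration driven by `R`. The step size `c` stands for
`1/d` and may lie in a ring of scalars `k` smaller than the ring `K` of matrix entries, so that
real step sizes can be used with complex matrices. -/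
def averagedStep [DecidableEq n] [SMul k K] (c : k) (R M : Matrix n n K) : Matrix n n K :=
  M + c • (M.trace • R ^ 2 - (R * M + M * R))

/-- The eigenvalues of the averaged iteration with step size `c` on an eigenvector of `R` with
eigenvalue `l`, where `t m` is the trace of the `m`-th operator. The iteration starts at index `1`;
the value at `0` is a placeholder. -/
def averagedEigenvalue [CommRing k] (c l : k) (t : ℕ → k) : ℕ → k
  | 0 => l
  | 1 => l
  | m + 2 => averagedEigenvalue c l t (m + 1) * (1 - 2 * l * c) + t (m + 1) * l ^ 2 * c

theorem averagedEigenvalue_succ [CommRing k] (c l : k) (t : ℕ → k) {m : ℕ} (hm : 1 ≤ m) :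
    averagedEigenvalue c l t (m + 1) =
      averagedEigenvalue c l t m * (1 - 2 * l * c) + t m * l ^ 2 * c := by
  obtain ⟨j, rfl⟩ := Nat.exists_eq_add_of_le' hm
  rw [averagedEigenvalue]

theorem averagedStep_mulVec [DecidableEq n] [CommRing k] [Algebra k K] {R M : Matrix n n K}
    {ψ : n → K} {a c l t : k} (hR : R *ᵥ ψ = l • ψ) (hM : M *ᵥ ψ = a • ψ)
    (ht : algebraMap k K t = M.trace) :
    averagedStep c R M *ᵥ ψ = (a * (1 - 2 * l * c) + t * l ^ 2 * c) • ψ := by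
  have hRR : R ^ 2 *ᵥ ψ = (l * l) • ψ := by
    rw [pow_two, ← mulVec_mulVec, hR, mulVec_smul, hR, smul_smul]
  have hRM : (R * M) *ᵥ ψ = (a * l) • ψ := by
    rw [← mulVec_mulVec, hM, mulVec_smul, hR, smul_smul]
  have hMR : (M * R) *ᵥ ψ = (l * a) • ψ := by
    rw [← mulVec_mulVec, hR, mulVec_smul, hM, smul_smul]
  rw [averagedStep, ← ht, algebraMap_smul, add_mulVec, smul_mulVec, sub_mulVec, smul_mulVec,
    add_mulVec, hM, hRR, hRM, hMR]
  module

theorem mulVec_eq_averagedEigenvalue_smul [DecidableEq n] [CommRing k] [Algebra k K]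
    {R : Matrix n n K} {A : ℕ → Matrix n n K} {ψ : n → K} {c l : k} {t : ℕ → k}
    (hA1 : A 1 = R) (hA : ∀ m, 1 ≤ m → A (m + 1) = averagedStep c R (A m))
    (ht : ∀ m, 1 ≤ m → algebraMap k K (t m) = (A m).trace) (hR : R *ᵥ ψ = l • ψ)
    {m : ℕ} (hm : 1 ≤ m) :
    A m *ᵥ ψ = averagedEigenvalue c l t m • ψ := by
  induction m, hm using Nat.le_induction with
  | base => rw [hA1, hR, averagedEigenvalue]
  | succ m hm ih =>
    rw [hA m hm, averagedEigenvalue_succ c l t hm, averagedStep_mulVec hR ih (ht m hm)]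

theorem isSelfAdjoint_trace_of_isHermitian {α : Type*} [AddCommMonoid α] [StarAddMonoid α]
    {M : Matrix n n α} (hM : M.IsHermitian) : IsSelfAdjoint M.trace := by
  rw [isSelfAdjoint_iff, ← trace_conjTranspose, hM.eq]

theorem isHermitian_mul_add_mul {α : Type*} [NonUnitalNonAssocSemiring α] [StarRing α]
    {M N : Matrix n n α} (hM : M.IsHermitian) (hN : N.IsHermitian) :
    (M * N + N * M).IsHermitian := by
  rw [IsHermitian, conjTranspose_add, conjTranspose_mul, conjTranspose_mul, hM.eq, hN.eq, add_comm]

theorem isHermitian_averagedStep [DecidableEq n] [StarRing K] [Star k] [SMul k K] [StarModule k K]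
    {c : k} {R M : Matrix n n K} (hc : IsSelfAdjoint c) (hR : R.IsHermitian)
    (hM : M.IsHermitian) : (averagedStep c R M).IsHermitian :=
  hM.add <| (((hR.pow 2).smul (isSelfAdjoint_trace_of_isHermitian hM)).sub
    (isHermitian_mul_add_mul hR hM)).smul hc

theorem isHermitian_of_averagedStep [DecidableEq n] [StarRing K] [Star k] [SMul k K]
    [StarModule k K] {c : k} {R : Matrix n n K} {A : ℕ → Matrix n n K} (hc : IsSelfAdjoint c)
    (hR : R.IsHermitian) (hA1 : (A 1).IsHermitian)
    (hA : ∀ m, 1 ≤ m → A (m + 1) = averagedStep c R (A m)) {m : ℕ} (hm : 1 ≤ m) :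
    (A m).IsHermitian := by
  induction m, hm using Nat.le_induction with
  | base => exact hA1
  | succ m hm ih => exact hA m hm ▸ isHermitian_averagedStep hc hR ih

theorem averaged_iteration_eigenvalue_recursion_general {𝕜 : Type*} [RCLike 𝕜] [DecidableEq n]
    {R : Matrix n n 𝕜} (hR : R.IsHermitian) {A : ℕ → Matrix n n 𝕜} {c : ℝ} (hA1 : A 1 = R)
    (hA : ∀ m, 1 ≤ m → A (m + 1) = averagedStep c R (A m))
    {ψ : n → 𝕜} {l : ℝ} (heig : R *ᵥ ψ = l • ψ) :
    ∃ a : ℕ → ℝ, a 1 = l ∧ ∀ m, 1 ≤ m →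
      A m *ᵥ ψ = a m • ψ ∧
      a (m + 1) = a m * (1 - 2 * l * c) + RCLike.re (A m).trace * l ^ 2 * c := by
  have trace_real : ∀ m, 1 ≤ m → algebraMap ℝ 𝕜 (RCLike.re (A m).trace) = (A m).trace :=
    fun m hm ↦ RCLike.conj_eq_iff_re.mp <| isSelfAdjoint_trace_of_isHermitian <|
      isHermitian_of_averagedStep (.all c) hR (hA1 ▸ hR) hA hm
  exact ⟨averagedEigenvalue c l fun m ↦ RCLike.re (A m).trace, by rw [averagedEigenvalue],
    fun m hm ↦ ⟨mulVec_eq_averagedEigenvalue_smul hA1 hA trace_real heig hm,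
      averagedEigenvalue_succ _ _ _ hm⟩⟩

end

/-- **Eigenvalue recursion for the averaged-iteration operators.**
Let `R` be Hermitian with `trace R = 1` and `A 1 = R`,
`A (n+1) = A n + (1/d) • (trace(A n) • R² - (R * A n + A n * R))`.  If `ψ` is an
eigenvector of `R` with (real) eigenvalue `l`, then `ψ` is an eigenvector of every
`A n`, and the corresponding (real) eigenvalues `a n` satisfy `a 1 = l` and
`a (n+1) = a n * (1 - 2*l/d) + trace(A n) * l²/d`. -/
theorem averaged_iteration_eigenvalue_recursion
    {d : ℕ} (hd : 0 < d)
    (R : Matrix (Fin d) (Fin d) ℂ) (hR : R.IsHermitian) (htr : R.trace = 1)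
    (A : ℕ → Matrix (Fin d) (Fin d) ℂ)
    (hA1 : A 1 = R)
    (hArec : ∀ n, 1 ≤ n →
      A (n + 1) = A n + ((d : ℂ))⁻¹ • ((A n).trace • R ^ 2 - (R * A n + A n * R)))
    (ψ : Fin d → ℂ) (hψ : ψ ≠ 0) (l : ℝ)
    (heig : R *ᵥ ψ = (l : ℂ) • ψ) :
    ∃ a : ℕ → ℝ, a 1 = l ∧
      ∀ n, 1 ≤ n →
        A n *ᵥ ψ = ((a n : ℝ) : ℂ) • ψ ∧
        a (n + 1) = a n * (1 - 2 * l / d) + ((A n).trace).re * l ^ 2 / d := by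
  have hstep : ∀ n, 1 ≤ n → A (n + 1) = averagedStep (d : ℝ)⁻¹ R (A n) := by
    simpa [averagedStep, RCLike.real_smul_eq_coe_smul (K := ℂ)] using hArec
  simpa only [div_eq_mul_inv, Complex.coe_smul, RCLike.re_eq_complex_re] using
    averaged_iteration_eigenvalue_recursion_general (l := l) hR hA1 hstep heig
end

section
/- Exponential decrease on the negative subspace: let d > 0 and λ > 0 be real numbers, let (t_n) be a real sequence with t_n ≤ 1 for all n, and let (b_n) be the real sequence defined by b₁ = −λ and b_{n+1} = b_n·(1 + 2λ/d) + t_n·λ²/d. Then b_n ≤ −λ·(1 + λ/d)^{n−1} for every n ≥ 1. -/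
/-!
With `x = l / d` the recursion is `b (n + 1) = (1 + x) * b n + x * (b n + t n * l)`. As long as
`b n ≤ -l`, the correction `x * (b n + t n * l)` is nonpositive, so `b n` is multiplied by at least
`1 + x`; being negative, it then stays below `-l`.
-/

section GeometricDecrease

variable {R : Type*} [CommRing R] [PartialOrder R] [IsOrderedRing R] {x l : R}

lemma mul_one_add_two_mul_add_le_mul_one_add (hx : 0 ≤ x) (hl : 0 ≤ l) {b t : R} (hb : b ≤ -l)
    (ht : t ≤ 1) : b * (1 + 2 * x) + t * (l * x) ≤ b * (1 + x) := by
  have correction_nonpos : (b + t * l) * x ≤ 0 := by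
    refine mul_nonpos_of_nonpos_of_nonneg ?_ hx
    calc b + t * l ≤ -l + l := add_le_add hb (mul_le_of_le_one_left hl ht)
      _ = 0 := neg_add_cancel l
  calc b * (1 + 2 * x) + t * (l * x) = b * (1 + x) + (b + t * l) * x := by ring
    _ ≤ b * (1 + x) := add_le_of_nonpos_right correction_nonpos

lemma neg_mul_one_add_pow_le_neg (hx : 0 ≤ x) (hl : 0 ≤ l) (n : ℕ) : -l * (1 + x) ^ n ≤ -l := by
  rw [neg_mul, neg_le_neg_iff]
  exact le_mul_of_one_le_right hl (one_le_pow₀ (le_add_of_nonneg_right hx))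

theorem negative_subspace_exponential_decrease_general (hx : 0 ≤ x) (hl : 0 ≤ l) {t b : ℕ → R}
    (ht : ∀ n, 1 ≤ n → t n ≤ 1) (hb1 : b 1 ≤ -l)
    (hbrec : ∀ n, 1 ≤ n → b (n + 1) ≤ b n * (1 + 2 * x) + t n * (l * x)) (n : ℕ) (hn : 1 ≤ n) :
    b n ≤ -l * (1 + x) ^ (n - 1) := by
  induction n, hn using Nat.le_induction with
  | base => simpa using hb1
  | succ n hn ih =>
    have hbn : b n ≤ -l := ih.trans (neg_mul_one_add_pow_le_neg hx hl (n - 1))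
    calc b (n + 1) ≤ b n * (1 + 2 * x) + t n * (l * x) := hbrec n hn
      _ ≤ b n * (1 + x) := mul_one_add_two_mul_add_le_mul_one_add hx hl hbn (ht n hn)
      _ ≤ -l * (1 + x) ^ (n - 1) * (1 + x) :=
        mul_le_mul_of_nonneg_right ih (add_nonneg zero_le_one hx)
      _ = -l * (1 + x) ^ (n + 1 - 1) := by
        rw [mul_assoc, pow_sub_one_mul (Nat.one_le_iff_ne_zero.mp hn), Nat.add_sub_cancel]

end GeometricDecrease

/-- **Exponential decrease on the negative subspace.**
Let `d > 0` and `l > 0` be real numbers, let `(t n)` be a real sequence with `t n ≤ 1`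
for all `n`, and let `(b n)` satisfy `b 1 = -l` and
`b (n+1) = b n * (1 + 2*l/d) + t n * l²/d`.  Then `b n ≤ -l * (1 + l/d)^(n-1)` for all
`n ≥ 1`. -/
theorem negative_subspace_exponential_decrease
    (d l : ℝ) (hd : 0 < d) (hl : 0 < l)
    (t : ℕ → ℝ) (ht : ∀ n, t n ≤ 1)
    (b : ℕ → ℝ) (hb1 : b 1 = -l)
    (hbrec : ∀ n, 1 ≤ n → b (n + 1) = b n * (1 + 2 * l / d) + t n * l ^ 2 / d) :
    ∀ n, 1 ≤ n → b n ≤ -l * (1 + l / d) ^ (n - 1) :=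
  negative_subspace_exponential_decrease_general (div_nonneg hl.le hd.le) hl.le (fun n _ ↦ ht n)
    hb1.le fun n hn ↦ ((hbrec n hn).trans (by ring)).le
end
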